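/- A priori L^p vorticity estimate for the forced transport equation. Let T > 0 and 2 ≤ p < ∞. Let u : [0,T) × ℝ² → ℝ² be continuously differentiable and divergence-free with sup_{t∈[0,T)} ‖u(t)‖_{L²(ℝ²)} < ∞; let ω : [0,T) × ℝ² → ℝ be continuously differentiable with sup_{t∈[0,T)} (‖ω(t)‖_{L²(ℝ²)} + ‖ω(t)‖_{L^∞(ℝ²)}) < ∞; let j : [0,T) × ℝ² → ℝ² and b : [0,T) × ℝ² → ℝ be measurable with ‖j‖_{L²([0,t); L^p(ℝ²))} < ∞ and ‖∇b‖_{L²([0,t); L^∞(ℝ²))} < ∞ for all t < T, where b is differentiable in x. Assume the transport equation ∂_t ω + u·∇ω = −j·∇b holds pointwise on [0,T) × ℝ². Then for every t ∈ (0,T): ‖ω(t)‖_{L^p(ℝ²)} ≤ ‖ω(0)‖_{L^p(ℝ²)} + ‖j‖_{L²([0,t); L^p(ℝ²))} · ‖∇b‖_{L²([0,t); L^∞(ℝ²))}. -/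

import Mathlib

open MeasureTheory Set
open scoped ENNReal

/-- Mixed time-Lebesgue norm `‖F‖_{L²([0,t))}` of an `ℝ≥0∞`-valued quantity. -/
noncomputable def timeL2 (t : ℝ) (F : ℝ → ℝ≥0∞) : ℝ≥0∞ :=
  (∫⁻ s in Set.Ico (0:ℝ) t, F s ^ (2:ℝ)) ^ ((1:ℝ) / 2)

/-- Cauchy–Schwarz in time, without measurability of the second factor `A`. -/
theorem lintegral_le_timeL2_mul_timeL2 {t : ℝ} {F J A : ℝ → ℝ≥0∞}
    (hF : AEMeasurable F (volume.restrict (Ico 0 t)))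
    (hJ : AEMeasurable J (volume.restrict (Ico 0 t)))
    (hJfin : timeL2 t J < ⊤)
    (hFJA : ∀ᵐ s ∂(volume.restrict (Ico 0 t)), F s ≤ A s * J s) :
    ∫⁻ s in Ico 0 t, F s ≤ timeL2 t J * timeL2 t A := by
  have hInt : ∫⁻ s in Ico 0 t, J s ^ (2:ℝ) ≠ ⊤ := by
    intro h
    rw [timeL2, h] at hJfin
    simp at hJfin
  have hJtop : ∀ᵐ s ∂(volume.restrict (Ico 0 t)), J s < ⊤ := by
    filter_upwards [ae_lt_top' (hJ.pow_const 2) hInt] with s hs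
    by_contra h
    simp [not_lt_top_iff.1 h] at hs
  calc ∫⁻ s in Ico 0 t, F s ≤ ∫⁻ s in Ico 0 t, (J * fun s => F s / J s) s := by
        refine lintegral_mono_ae ?_
        filter_upwards [hJtop, hFJA] with s hs hFs
        rcases eq_or_ne (J s) 0 with h0 | h0
        · simpa [h0] using hFs
        · exact (ENNReal.mul_div_cancel h0 hs.ne).ge
    _ ≤ timeL2 t J * (∫⁻ s in Ico 0 t, (F s / J s) ^ (2:ℝ)) ^ ((1:ℝ) / 2) :=
        ENNReal.lintegral_mul_le_Lp_mul_Lq _ Real.HolderConjugate.two_two hJ (hF.div hJ)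
    _ ≤ timeL2 t J * timeL2 t A := by
        unfold timeL2
        gcongr _ * ?_ ^ _
        refine lintegral_mono_ae ?_
        filter_upwards [hFJA] with s hFs
        gcongr
        exact ENNReal.div_le_of_le_mul hFs

/-- Smooth cutoffs exhausting the space, with uniformly small gradient. -/
theorem exists_cutoff {E : Type*} [NormedAddCommGroup E] [NormedSpace ℝ E]
    [FiniteDimensional ℝ E] [HasContDiffBump E] :
    ∃ (φ : ℕ → E → ℝ) (ε : ℕ → ℝ), (∀ n, ContDiff ℝ 1 (φ n)) ∧
      (∀ n, HasCompactSupport (φ n)) ∧ (∀ n x, 0 ≤ φ n x) ∧ (∀ n x, φ n x ≤ 1) ∧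
      (∀ n x, ‖fderiv ℝ (φ n) x‖ ≤ ε n) ∧
      Filter.Tendsto ε Filter.atTop (nhds 0) ∧
      ∀ x, Filter.Tendsto (fun n => φ n x) Filter.atTop (nhds 1) := by
  let ψ : ContDiffBump (0 : E) := ⟨1, 2, one_pos, one_lt_two⟩
  have hψ : ContDiff ℝ 1 ψ := ψ.contDiff
  obtain ⟨M, hM⟩ := (hψ.continuous_fderiv one_ne_zero).bounded_above_of_compact_support
    (ψ.hasCompactSupport.fderiv ℝ)
  have hc : ∀ n : ℕ, (1 / ((n : ℝ) + 1)) ≠ 0 := fun n => by positivity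
  have hlim : Filter.Tendsto (fun n : ℕ => 1 / ((n : ℝ) + 1)) Filter.atTop (nhds 0) :=
    tendsto_one_div_add_atTop_nhds_zero_nat
  refine ⟨fun n x => ψ ((1 / ((n : ℝ) + 1)) • x), fun n => (1 / ((n : ℝ) + 1)) * M, ?_, ?_,
    fun n x => ψ.nonneg, fun n x => ψ.le_one, ?_, ?_, ?_⟩
  · intro n
    exact hψ.comp (contDiff_const_smul _)
  · intro n
    exact ψ.hasCompactSupport.comp_smul (hc n)
  · intro n x
    rw [fderiv_comp_smul, norm_smul, Real.norm_of_nonneg (by positivity)]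
    exact mul_le_mul_of_nonneg_left (hM _) (by positivity)
  · simpa using hlim.mul_const M
  · intro x
    have h0 : Filter.Tendsto (fun n : ℕ => (1 / ((n : ℝ) + 1)) • x) Filter.atTop (nhds 0) := by
      simpa using hlim.smul_const x
    have := (ψ.continuous.tendsto 0).comp h0
    rwa [ψ.one_of_mem_closedBall (by simp [ψ])] at this

/-- Differentiation under the integral sign for integrands supported in a fixed compact set. -/
theorem hasDerivAt_integral_of_compact_support {E : Type*} [TopologicalSpace E]
    [MeasurableSpace E] [OpensMeasurableSpace E] [T2Space E] {μ : Measure E}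
    [IsFiniteMeasureOnCompacts μ] {F F' : ℝ → E → ℝ} {U : Set ℝ} {K : Set E} {s₀ : ℝ}
    (hU : IsOpen U) (hs₀ : s₀ ∈ U) (hK : IsCompact K)
    (hF : ∀ s ∈ U, Continuous (F s)) (hFK : ∀ s ∈ U, ∀ x ∉ K, F s x = 0)
    (hF' : ContinuousOn (Function.uncurry F') (U ×ˢ univ))
    (hF'K : ∀ s ∈ U, ∀ x ∉ K, F' s x = 0)
    (hderiv : ∀ s ∈ U, ∀ x, HasDerivAt (fun s => F s x) (F' s x) s) :
    HasDerivAt (fun s => ∫ x, F s x ∂μ) (∫ x, F' s₀ x ∂μ) s₀ := by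
  obtain ⟨L, hLn, hLU, hL⟩ := local_compact_nhds (hU.mem_nhds hs₀)
  obtain ⟨C, hC⟩ := (hL.prod hK).exists_bound_of_continuousOn
    (hF'.mono (prod_mono hLU (subset_univ K)))
  have hsupp : ∀ s ∈ U, HasCompactSupport (F s) := fun s hs =>
    HasCompactSupport.intro hK (hFK s hs)
  have hF'c : Continuous (F' s₀) :=
    hF'.comp_continuous (f := fun x => (s₀, x)) (by fun_prop) (fun x => ⟨hs₀, mem_univ x⟩)
  refine (hasDerivAt_integral_of_dominated_loc_of_deriv_le (bound := K.indicator fun _ => C)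
    hLn ?_ ?_ ?_ ?_ ?_ ?_).2
  · filter_upwards [hU.mem_nhds hs₀] with s hs
    exact ((hF s hs).integrable_of_hasCompactSupport (hsupp s hs)).aestronglyMeasurable
  · exact (hF s₀ hs₀).integrable_of_hasCompactSupport (hsupp s₀ hs₀)
  · exact (hF'c.integrable_of_hasCompactSupport
      (HasCompactSupport.intro hK (hF'K s₀ hs₀))).aestronglyMeasurable
  · refine .of_forall fun x s hs => ?_
    by_cases hx : x ∈ K
    · rw [indicator_of_mem hx]
      exact hC (s, x) ⟨hs, hx⟩
    · simp [hx, hF'K s (hLU hs) x hx]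
  · exact (integrable_indicator_iff hK.measurableSet).2
      (integrableOn_const hK.measure_lt_top.ne)
  · exact .of_forall fun x s hs => hderiv s (hLU hs) x

/-- Integration by parts against a divergence-free field in the plane. -/
theorem integral_mul_fderiv_apply_of_divergence_free
    {v : EuclideanSpace ℝ (Fin 2) → EuclideanSpace ℝ (Fin 2)}
    {φ W : EuclideanSpace ℝ (Fin 2) → ℝ}
    (hv : ContDiff ℝ 1 v) (hφ : ContDiff ℝ 1 φ) (hW : ContDiff ℝ 1 W)
    (hsupp : HasCompactSupport φ)
    (hdiv : ∀ x, fderiv ℝ (fun y => v y 0) x (EuclideanSpace.single 0 1) +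
        fderiv ℝ (fun y => v y 1) x (EuclideanSpace.single 1 1) = 0) :
    ∫ x, φ x * fderiv ℝ W x (v x) = -∫ x, W x * fderiv ℝ φ x (v x) := by
  have hvi : ∀ i, ContDiff ℝ 1 (fun y => v y i) := fun i => by fun_prop
  have hvec : ∀ x, v x = v x 0 • EuclideanSpace.single 0 1 + v x 1 • EuclideanSpace.single 1 1 := by
    intro x
    ext i
    fin_cases i <;> simp
  have hprod : ∀ i, ContDiff ℝ 1 (fun y => φ y * v y i) := fun i => hφ.mul (hvi i)
  have hps : ∀ i, HasCompactSupport (fun y => φ y * v y i) := fun i => hsupp.mul_right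
  have hWc : ∀ e, Continuous (fun x => fderiv ℝ W x e) := fun e =>
    (hW.continuous_fderiv one_ne_zero).clm_apply continuous_const
  have hpc : ∀ i e, Continuous (fun x => fderiv ℝ (fun y => φ y * v y i) x e) := fun i e =>
    ((hprod i).continuous_fderiv one_ne_zero).clm_apply continuous_const
  have hI1 : ∀ i e, Integrable (fun x => fderiv ℝ (fun y => φ y * v y i) x e * W x) := fun i e =>
    ((hpc i e).mul hW.continuous).integrable_of_hasCompactSupport
      (((hps i).fderiv_apply (𝕜 := ℝ) e).mul_right)
  have hI2 : ∀ i e, Integrable (fun x => (φ x * v x i) * fderiv ℝ W x e) := fun i e =>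
    ((hprod i).continuous.mul (hWc e)).integrable_of_hasCompactSupport (hps i).mul_right
  have hibp : ∀ i e, ∫ x, (φ x * v x i) * fderiv ℝ W x e =
      -∫ x, fderiv ℝ (fun y => φ y * v y i) x e * W x := fun i e =>
    integral_mul_fderiv_eq_neg_fderiv_mul_of_integrable (hI1 i e) (hI2 i e)
      (((hprod i).continuous.mul hW.continuous).integrable_of_hasCompactSupport (hps i).mul_right)
      (fun x _ => (hprod i).differentiable one_ne_zero x)
      (fun x _ => hW.differentiable one_ne_zero x)
  have hsplit : ∀ x, φ x * fderiv ℝ W x (v x) =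
      (φ x * v x 0) * fderiv ℝ W x (EuclideanSpace.single 0 1) +
        (φ x * v x 1) * fderiv ℝ W x (EuclideanSpace.single 1 1) := by
    intro x
    conv_lhs => rw [hvec x]
    simp only [map_add, map_smul, smul_eq_mul]
    ring
  have hsplit' : ∀ x, W x * fderiv ℝ φ x (v x) =
      fderiv ℝ (fun y => φ y * v y 0) x (EuclideanSpace.single 0 1) * W x +
        fderiv ℝ (fun y => φ y * v y 1) x (EuclideanSpace.single 1 1) * W x := by
    intro x
    have hd : ∀ i e, fderiv ℝ (fun y => φ y * v y i) x e =
        φ x * fderiv ℝ (fun y => v y i) x e + v x i * fderiv ℝ φ x e := by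
      intro i e
      rw [fderiv_fun_mul (hφ.differentiable one_ne_zero x) ((hvi i).differentiable one_ne_zero x)]
      simp
    rw [hd, hd]
    conv_lhs => rw [hvec x]
    simp only [map_add, map_smul, smul_eq_mul]
    linear_combination (-(φ x * W x)) * hdiv x
  simp_rw [hsplit, hsplit']
  rw [integral_add (hI2 _ _) (hI2 _ _), integral_add (hI1 _ _) (hI1 _ _), hibp, hibp]
  ring

/-- Hölder's inequality with a continuous compactly supported weight. -/
theorem integral_weight_mul_le {E : Type*} [TopologicalSpace E]
    [MeasurableSpace E] [OpensMeasurableSpace E] {μ : Measure E}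
    [IsFiniteMeasureOnCompacts μ] {φ w r : E → ℝ} {q : ℝ} (hq : 1 < q)
    (hφ : Continuous φ) (hφ0 : ∀ x, 0 ≤ φ x) (hsupp : HasCompactSupport φ)
    (hw : Continuous w) (hr : Continuous r) :
    ∫ x, φ x * (|w x| ^ (q - 1) * |r x|) ∂μ ≤
      (∫ x, φ x * |w x| ^ q ∂μ) ^ (1 - 1 / q) * (∫ x, φ x * |r x| ^ q ∂μ) ^ (1 / q) := by
  have hq0 : 0 < q := by linarith
  have hq1 : 0 < q - 1 := by linarith
  have hconj := (Real.HolderConjugate.conjExponent hq).symm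
  set q' := q.conjExponent with hq'
  have hq'0 : 0 < q' := hconj.pos
  have hinv : 1 / q' = 1 - 1 / q := by
    rw [hq', Real.conjExponent]; field_simp
  have hmul : (q - 1) * q' = q := by
    rw [hq', Real.conjExponent]; field_simp
  have hφc : ∀ a : ℝ, 0 < a → HasCompactSupport (fun x => φ x ^ a) := fun a ha =>
    hsupp.comp_left (g := fun y : ℝ => y ^ a) (Real.zero_rpow ha.ne')
  have h1 : Continuous fun x => φ x ^ (1 / q') * |w x| ^ (q - 1) :=
    (hφ.rpow_const fun _ => Or.inr (by positivity)).mul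
      (hw.abs.rpow_const fun _ => Or.inr hq1.le)
  have h2 : Continuous fun x => φ x ^ (1 / q) * |r x| :=
    (hφ.rpow_const fun _ => Or.inr (by positivity)).mul hr.abs
  have key := integral_mul_le_Lp_mul_Lq_of_nonneg (μ := μ) hconj
    (f := fun x => φ x ^ (1 / q') * |w x| ^ (q - 1)) (g := fun x => φ x ^ (1 / q) * |r x|)
    (.of_forall fun x => mul_nonneg (Real.rpow_nonneg (hφ0 x) _) (by positivity))
    (.of_forall fun x => mul_nonneg (Real.rpow_nonneg (hφ0 x) _) (by positivity))
    (h1.memLp_of_hasCompactSupport (hφc _ (by positivity)).mul_right)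
    (h2.memLp_of_hasCompactSupport (hφc _ (by positivity)).mul_right)
  have e0 : ∀ x, (φ x ^ (1 / q') * |w x| ^ (q - 1)) * (φ x ^ (1 / q) * |r x|) =
      φ x * (|w x| ^ (q - 1) * |r x|) := by
    intro x
    have : φ x ^ (1 / q') * φ x ^ (1 / q) = φ x := by
      rw [← Real.rpow_add' (hφ0 x) (by rw [hinv]; norm_num), hinv]; simp
    linear_combination (|w x| ^ (q - 1) * |r x|) * this
  have e1 : ∀ x, (φ x ^ (1 / q') * |w x| ^ (q - 1)) ^ q' = φ x * |w x| ^ q := by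
    intro x
    rw [Real.mul_rpow (Real.rpow_nonneg (hφ0 x) _) (by positivity), ← Real.rpow_mul (hφ0 x),
      ← Real.rpow_mul (abs_nonneg _), hmul, one_div_mul_cancel hq'0.ne', Real.rpow_one]
  have e2 : ∀ x, (φ x ^ (1 / q) * |r x|) ^ q = φ x * |r x| ^ q := by
    intro x
    rw [Real.mul_rpow (Real.rpow_nonneg (hφ0 x) _) (by positivity), ← Real.rpow_mul (hφ0 x),
      one_div_mul_cancel hq0.ne', Real.rpow_one]
  simp only [e0, e1, e2] at key
  rwa [hinv] at key

/-- Nonlinear Grönwall inequality for `g' ≤ q g^{1-1/q} ρ + κ`, regularised by `ε`. -/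
theorem rpow_add_le_of_deriv_le {g g' ρ : ℝ → ℝ} {t q κ ε : ℝ} (ht : 0 ≤ t) (hq : 1 ≤ q)
    (hε : 0 < ε) (hκ : 0 ≤ κ) (hg0 : ∀ s ∈ Icc 0 t, 0 ≤ g s) (hρ0 : ∀ s ∈ Icc 0 t, 0 ≤ ρ s)
    (hg : ContinuousOn g (Icc 0 t)) (hρ : ContinuousOn ρ (Icc 0 t))
    (hderiv : ∀ s ∈ Ioo 0 t, HasDerivAt g (g' s) s)
    (hle : ∀ s ∈ Ioo 0 t, g' s ≤ q * (g s ^ (1 - 1 / q) * ρ s) + κ) :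
    (g t + ε) ^ (1 / q) ≤
      (g 0 + ε) ^ (1 / q) + (∫ s in (0:ℝ)..t, ρ s) + t * (ε ^ (1 / q - 1) * κ) := by
  have hq0 : 0 < q := by linarith
  have h1q : 1 / q ≤ 1 := by rw [div_le_one hq0]; exact hq
  have hpos : ∀ s ∈ Icc 0 t, 0 < g s + ε := fun s hs => by linarith [hg0 s hs]
  have hρi : IntervalIntegrable ρ volume 0 t :=
    ContinuousOn.intervalIntegrable_of_Icc ht hρ
  have key := intervalIntegral.sub_le_integral_of_hasDeriv_right_of_le
    (g := fun s => (g s + ε) ^ (1 / q))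
    (g' := fun s => g' s * (1 / q) * (g s + ε) ^ (1 / q - 1))
    (φ := fun s => ρ s + ε ^ (1 / q - 1) * κ) ht
    ((hg.add continuousOn_const).rpow_const fun s hs => Or.inl (hpos s hs).ne')
    (fun s hs => (((hderiv s hs).add_const ε).rpow_const
      (Or.inl (hpos s (Ioo_subset_Icc_self hs)).ne')).hasDerivWithinAt)
    ((hρ.add continuousOn_const).integrableOn_Icc) ?_
  · rw [intervalIntegral.integral_add hρi (by simp), intervalIntegral.integral_const] at key
    simp only [sub_zero, smul_eq_mul] at key
    linarith
  · intro s hs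
    have hs' := Ioo_subset_Icc_self hs
    have hp := hpos s hs'
    set G := g s + ε
    have hGε : ε ≤ G := by simp only [G]; linarith [hg0 s hs']
    have a1 : G ^ (1 / q - 1) ≤ ε ^ (1 / q - 1) :=
      Real.rpow_le_rpow_of_nonpos hε hGε (by linarith)
    have a2 : g s ^ (1 - 1 / q) * G ^ (1 / q - 1) ≤ 1 := by
      calc _ ≤ G ^ (1 - 1 / q) * G ^ (1 / q - 1) := by
            gcongr
            · exact hg0 s hs'
            · simp only [G]; linarith
        _ = 1 := by rw [← Real.rpow_add hp]; simp
    have hGn : 0 ≤ G ^ (1 / q - 1) := Real.rpow_nonneg hp.le _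
    calc g' s * (1 / q) * G ^ (1 / q - 1)
        ≤ (q * (g s ^ (1 - 1 / q) * ρ s) + κ) * (1 / q) * G ^ (1 / q - 1) := by
          gcongr; exact hle s hs
      _ = ρ s * (g s ^ (1 - 1 / q) * G ^ (1 / q - 1)) + (1 / q) * (G ^ (1 / q - 1) * κ) := by
          field_simp
      _ ≤ ρ s * 1 + 1 * (ε ^ (1 / q - 1) * κ) := by
          gcongr
          exact hρ0 s hs'
      _ = ρ s + ε ^ (1 / q - 1) * κ := by ring

theorem contDiff_slice {E F : Type*} [NormedAddCommGroup E] [NormedSpace ℝ E]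
    [NormedAddCommGroup F] [NormedSpace ℝ F] {f : ℝ → E → F} {I : Set ℝ}
    (hf : ContDiffOn ℝ 1 (Function.uncurry f) (I ×ˢ univ)) {s : ℝ} (hs : s ∈ I) :
    ContDiff ℝ 1 (f s) :=
  hf.comp_contDiff (f := fun x => (s, x)) (by fun_prop) fun x => ⟨hs, mem_univ x⟩

theorem fderiv_slice_apply {E F : Type*} [NormedAddCommGroup E] [NormedSpace ℝ E]
    [NormedAddCommGroup F] [NormedSpace ℝ F] {f : ℝ → E → F} {I : Set ℝ}
    (hf : ContDiffOn ℝ 1 (Function.uncurry f) (I ×ˢ univ)) {s : ℝ} (hs : s ∈ I) (x v : E) :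
    fderiv ℝ (f s) x v =
      fderivWithin ℝ (Function.uncurry f) (I ×ˢ univ) (s, x) (0, v) := by
  have h1 := (hf.differentiableOn one_ne_zero (s, x) ⟨hs, mem_univ x⟩).hasFDerivWithinAt
  have h2 : HasFDerivWithinAt (fun y : E => (s, y)) (ContinuousLinearMap.inr ℝ ℝ E) univ x :=
    (hasFDerivAt_prodMk_right s x).hasFDerivWithinAt
  have h3 := (h1.comp x h2 fun y _ => ⟨hs, mem_univ y⟩).hasFDerivAt Filter.univ_mem
  have h4 : HasFDerivAt (f s) _ x := h3
  rw [h4.fderiv]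
  simp

theorem hasDerivAt_slice {E F : Type*} [NormedAddCommGroup E] [NormedSpace ℝ E]
    [NormedAddCommGroup F] [NormedSpace ℝ F] {f : ℝ → E → F} {I : Set ℝ}
    (hf : ContDiffOn ℝ 1 (Function.uncurry f) (I ×ˢ univ)) {s : ℝ} (hs : I ∈ nhds s) (x : E) :
    HasDerivAt (fun s => f s x)
      (fderivWithin ℝ (Function.uncurry f) (I ×ˢ univ) (s, x) (1, 0)) s := by
  have h1 := (hf.differentiableOn one_ne_zero (s, x)
    ⟨mem_of_mem_nhds hs, mem_univ x⟩).hasFDerivWithinAt.hasFDerivAt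
      (prod_mem_nhds hs Filter.univ_mem)
  have h2 : HasDerivAt (fun s : ℝ => (s, x)) ((1 : ℝ), (0 : E)) s :=
    (hasDerivAt_id s).prodMk (hasDerivAt_const s x)
  exact h1.comp_hasDerivAt s h2

theorem integrable_norm_sq_and_le {E F : Type*} [MeasurableSpace E] [NormedAddCommGroup F]
    {μ : Measure E} {f : E → F} {C : ℝ≥0∞} (hf : AEStronglyMeasurable f μ)
    (hC : C ≠ ⊤) (hfC : eLpNorm f 2 μ ≤ C) :
    Integrable (fun x => ‖f x‖ ^ 2) μ ∧ ∫ x, ‖f x‖ ^ 2 ∂μ ≤ C.toReal ^ 2 := by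
  have hmem : MemLp f 2 μ := ⟨hf, hfC.trans_lt hC.lt_top⟩
  refine ⟨hmem.integrable_norm_pow two_ne_zero, ?_⟩
  have h := hmem.eLpNorm_eq_integral_rpow_norm two_ne_zero ENNReal.ofNat_ne_top
  have h0 : 0 ≤ ∫ x, ‖f x‖ ^ 2 ∂μ := integral_nonneg fun x => by positivity
  have h2 : (eLpNorm f 2 μ).toReal = Real.sqrt (∫ x, ‖f x‖ ^ 2 ∂μ) := by
    rw [h, ENNReal.toReal_ofReal (by simp; positivity)]
    simp [Real.sqrt_eq_rpow]
  have h3 := ENNReal.toReal_mono hC hfC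
  rw [h2] at h3
  calc ∫ x, ‖f x‖ ^ 2 ∂μ = Real.sqrt (∫ x, ‖f x‖ ^ 2 ∂μ) ^ 2 := (Real.sq_sqrt h0).symm
    _ ≤ C.toReal ^ 2 := by gcongr

theorem ae_norm_le_toReal {E F : Type*} [MeasurableSpace E] [NormedAddCommGroup F]
    {μ : Measure E} {f : E → F} {C : ℝ≥0∞} (hC : C ≠ ⊤) (hfC : eLpNorm f ∞ μ ≤ C) :
    ∀ᵐ x ∂μ, ‖f x‖ ≤ C.toReal := by
  rw [eLpNorm_exponent_top] at hfC
  filter_upwards [ae_le_eLpNormEssSup (f := f) (μ := μ)] with x hx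
  simpa using ENNReal.toReal_mono hC (hx.trans hfC)

theorem memLp_of_two_of_top {E F : Type*} [MeasurableSpace E] [NormedAddCommGroup F]
    {μ : Measure E} {f : E → F} {p C : ℝ≥0∞} (hp : 2 ≤ p) (hpfin : p ≠ ∞)
    (hf : AEStronglyMeasurable f μ) (hC : C ≠ ⊤)
    (hf2 : eLpNorm f 2 μ ≤ C) (hfC : eLpNorm f ∞ μ ≤ C) : MemLp f p μ := by
  have hq : 2 ≤ p.toReal := by simpa using ENNReal.toReal_mono hpfin hp
  rw [← integrable_norm_rpow_iff hf (by positivity) hpfin]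
  refine (((integrable_norm_sq_and_le hf hC hf2).1).const_mul
    (C.toReal ^ (p.toReal - 2))).mono' ?_ ?_
  · exact (hf.norm.aemeasurable.pow_const _).aestronglyMeasurable
  · filter_upwards [ae_norm_le_toReal hC hfC] with x hx
    rw [Real.norm_of_nonneg (by positivity)]
    calc ‖f x‖ ^ p.toReal = ‖f x‖ ^ (p.toReal - 2) * ‖f x‖ ^ 2 := by
          rw [← Real.rpow_natCast, ← Real.rpow_add_of_nonneg (norm_nonneg _) (by linarith)
            (by norm_num)]
          norm_num
      _ ≤ C.toReal ^ (p.toReal - 2) * ‖f x‖ ^ 2 := by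
          gcongr

/-- The boundary flux through the cutoff region is controlled by the gradient of the cutoff. -/
theorem integral_flux_le {E : Type*} [NormedAddCommGroup E] [NormedSpace ℝ E]
    [MeasurableSpace E] {μ : Measure E} {w φ : E → ℝ} {v : E → E} {q δ : ℝ}
    {U C : ℝ≥0∞} (hq : 1 ≤ q) (hv : AEStronglyMeasurable v μ) (hw : AEStronglyMeasurable w μ)
    (hU : U ≠ ⊤) (hvU : eLpNorm v 2 μ ≤ U) (hC : C ≠ ⊤)
    (hw2 : eLpNorm w 2 μ ≤ C) (hwC : eLpNorm w ∞ μ ≤ C)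
    (hδ : ∀ x, ‖fderiv ℝ φ x‖ ≤ δ) :
    ∫ x, |w x| ^ q * fderiv ℝ φ x (v x) ∂μ ≤
      δ * (U.toReal ^ 2 + (C.toReal ^ (q - 1)) ^ 2 * C.toReal ^ 2) := by
  have hq1 : 0 ≤ q - 1 := by linarith
  obtain ⟨iv, bv⟩ := integrable_norm_sq_and_le hv hU hvU
  obtain ⟨iw, bw⟩ := integrable_norm_sq_and_le hw hC hw2
  have hδ0 : 0 ≤ δ := (norm_nonneg _).trans (hδ 0)
  have hInt : Integrable
      (fun x => δ * (‖v x‖ ^ 2 + (C.toReal ^ (q - 1)) ^ 2 * ‖w x‖ ^ 2)) μ :=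
    (iv.add (iw.const_mul _)).const_mul δ
  calc ∫ x, |w x| ^ q * fderiv ℝ φ x (v x) ∂μ
      ≤ ∫ x, δ * (‖v x‖ ^ 2 + (C.toReal ^ (q - 1)) ^ 2 * ‖w x‖ ^ 2) ∂μ := by
        refine (Real.le_norm_self _).trans (norm_integral_le_of_norm_le hInt ?_)
        filter_upwards [ae_norm_le_toReal hC hwC] with x hx
        have h1 : |w x| ^ q = |w x| ^ (q - 1) * |w x| := by
          rw [← Real.rpow_add_one' (abs_nonneg _) (by linarith), sub_add_cancel]
        have h2 : |w x| ^ (q - 1) ≤ C.toReal ^ (q - 1) :=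
          Real.rpow_le_rpow (abs_nonneg _) hx hq1
        calc ‖|w x| ^ q * fderiv ℝ φ x (v x)‖ = |w x| ^ q * ‖fderiv ℝ φ x (v x)‖ := by
              rw [norm_mul, Real.norm_of_nonneg (by positivity)]
          _ ≤ (C.toReal ^ (q - 1) * |w x|) * (δ * ‖v x‖) := by
              rw [h1]
              gcongr
              exact (fderiv ℝ φ x).le_of_opNorm_le (hδ x) _
          _ = δ * (‖v x‖ * (C.toReal ^ (q - 1) * ‖w x‖)) := by rw [Real.norm_eq_abs]; ring
          _ ≤ δ * (‖v x‖ ^ 2 + (C.toReal ^ (q - 1)) ^ 2 * ‖w x‖ ^ 2) := by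
              gcongr
              nlinarith [sq_nonneg (‖v x‖ - C.toReal ^ (q - 1) * ‖w x‖), sq_nonneg ‖v x‖,
                sq_nonneg (C.toReal ^ (q - 1) * ‖w x‖)]
    _ = δ * (∫ x, ‖v x‖ ^ 2 ∂μ + (C.toReal ^ (q - 1)) ^ 2 * ∫ x, ‖w x‖ ^ 2 ∂μ) := by
        rw [integral_const_mul, integral_add iv (iw.const_mul _), integral_const_mul]
    _ ≤ _ := by gcongr

/-- The `L^q` estimate localised by a cutoff `φ`; the error made by the cutoff is `κ`. -/
theorem transport_localized_estimate {T t q κ ε : ℝ} (hq : 1 < q) (ht : t ∈ Ioo 0 T)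
    (hε : 0 < ε) (hκ : 0 ≤ κ)
    {u : ℝ → EuclideanSpace ℝ (Fin 2) → EuclideanSpace ℝ (Fin 2)}
    {ω r : ℝ → EuclideanSpace ℝ (Fin 2) → ℝ} {φ : EuclideanSpace ℝ (Fin 2) → ℝ}
    (hu : ContDiffOn ℝ 1 (Function.uncurry u) (Ico 0 T ×ˢ univ))
    (hdiv : ∀ t ∈ Ico (0:ℝ) T, ∀ x,
      fderiv ℝ (fun y => u t y 0) x (EuclideanSpace.single 0 1) +
        fderiv ℝ (fun y => u t y 1) x (EuclideanSpace.single 1 1) = 0)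
    (hω : ContDiffOn ℝ 1 (Function.uncurry ω) (Ico 0 T ×ˢ univ))
    (hr : ContinuousOn (Function.uncurry r) (Ico 0 T ×ˢ univ))
    (heq : ∀ t ∈ Ico (0:ℝ) T, ∀ x,
      fderivWithin ℝ (Function.uncurry ω) (Ico 0 T ×ˢ univ) (t, x) (1, 0)
        + fderiv ℝ (ω t) x (u t x) = r t x)
    (hφ : ContDiff ℝ 1 φ) (hsupp : HasCompactSupport φ) (hφ0 : ∀ x, 0 ≤ φ x)
    (hflux : ∀ s ∈ Ico (0:ℝ) T, ∫ x, |ω s x| ^ q * fderiv ℝ φ x (u s x) ≤ κ) :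
    ((∫ x, φ x * |ω t x| ^ q) + ε) ^ (1 / q) ≤
      ((∫ x, φ x * |ω 0 x| ^ q) + ε) ^ (1 / q) +
        (∫ s in (0:ℝ)..t, (∫ x, φ x * |r s x| ^ q) ^ (1 / q)) + t * (ε ^ (1 / q - 1) * κ) := by
  have hq0 : 0 < q := by linarith
  have hIcc : Icc 0 t ⊆ Ico 0 T := Icc_subset_Ico_right ht.2
  have hφz : ∀ x ∉ tsupport φ, φ x = 0 := fun x hx => image_eq_zero_of_notMem_tsupport hx
  have hφc : ContinuousOn (fun z : ℝ × EuclideanSpace ℝ (Fin 2) => φ z.2) (Ico 0 T ×ˢ univ) :=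
    (hφ.continuous.comp continuous_snd).continuousOn
  have hcont : ∀ f : ℝ → EuclideanSpace ℝ (Fin 2) → ℝ,
      ContinuousOn (Function.uncurry f) (Ico 0 T ×ˢ univ) →
      ContinuousOn (fun s => ∫ x, φ x * |f s x| ^ q) (Ico 0 T) := fun f hf =>
    continuousOn_integral_of_compact_support (f := fun s x => φ x * |f s x| ^ q) hsupp
      (hφc.mul (hf.abs.rpow_const fun _ _ => Or.inr hq0.le))
      fun s x _ hx => by simp [hφz x hx]
  have hnonneg : ∀ f : EuclideanSpace ℝ (Fin 2) → ℝ, 0 ≤ ∫ x, φ x * |f x| ^ q := fun f =>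
    integral_nonneg fun x => mul_nonneg (hφ0 x) (by positivity)
  have hsgn : Continuous fun y : ℝ => q * |y| ^ (q - 2) * y := by
    have h1 : deriv (fun y : ℝ => |y| ^ q) = fun y : ℝ => q * |y| ^ (q - 2) * y :=
      funext fun y => (hasDerivAt_abs_rpow y hq).deriv
    rw [← h1]
    exact (contDiff_norm_rpow (E := ℝ) hq).continuous_deriv le_rfl
  set D : ℝ → EuclideanSpace ℝ (Fin 2) → ℝ := fun s x =>
    fderivWithin ℝ (Function.uncurry ω) (Ico 0 T ×ˢ univ) (s, x) (1, 0)
  have hDc : ContinuousOn (Function.uncurry D) (Ico 0 T ×ˢ univ) :=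
    (hω.continuousOn_fderivWithin ((uniqueDiffOn_Ico 0 T).prod uniqueDiffOn_univ)
      le_rfl).clm_apply continuousOn_const
  have hderiv : ∀ s ∈ Ioo 0 T, HasDerivAt (fun s => ∫ x, φ x * |ω s x| ^ q)
      (∫ x, φ x * (q * |ω s x| ^ (q - 2) * ω s x * D s x)) s := fun s hs =>
    hasDerivAt_integral_of_compact_support (F := fun s x => φ x * |ω s x| ^ q)
      (F' := fun s x => φ x * (q * |ω s x| ^ (q - 2) * ω s x * D s x)) isOpen_Ioo hs hsupp
      (fun s hs => hφ.continuous.mul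
        ((contDiff_slice hω (Ioo_subset_Ico_self hs)).continuous.abs.rpow_const
          fun _ => Or.inr hq0.le))
      (fun s _ x hx => by simp [hφz x hx])
      ((hφc.mul ((hsgn.comp_continuousOn hω.continuousOn).mul hDc)).mono
        (prod_mono Ioo_subset_Ico_self subset_rfl))
      (fun s _ x hx => by simp [hφz x hx])
      (fun s hs x => (HasDerivAt.comp s (h₂ := fun y : ℝ => |y| ^ q)
        (hasDerivAt_abs_rpow (ω s x) hq)
        (hasDerivAt_slice hω (Ico_mem_nhds hs.1 hs.2) x)).const_mul (φ x))
  refine rpow_add_le_of_deriv_le (g := fun s => ∫ x, φ x * |ω s x| ^ q)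
    (ρ := fun s => (∫ x, φ x * |r s x| ^ q) ^ (1 / q)) ht.1.le hq.le hε hκ
    (fun s _ => hnonneg _) (fun s _ => Real.rpow_nonneg (hnonneg _) _)
    ((hcont ω hω.continuousOn).mono hIcc)
    (((hcont r hr).mono hIcc).rpow_const fun _ _ => Or.inr (by positivity))
    (fun s hs => hderiv s ⟨hs.1, hs.2.trans ht.2⟩) ?_
  intro s hs
  have hs' : s ∈ Ico 0 T := ⟨hs.1.le, hs.2.trans ht.2⟩
  have hωs := contDiff_slice hω hs'
  have hus := contDiff_slice hu hs'
  have hrs : Continuous (r s) :=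
    hr.comp_continuous (f := fun x => (s, x)) (by fun_prop) fun x => ⟨hs', mem_univ x⟩
  have hW : ContDiff ℝ 1 fun x => |ω s x| ^ q := (contDiff_norm_rpow (E := ℝ) hq).comp hωs
  have hWd : ∀ x v, fderiv ℝ (fun x => |ω s x| ^ q) x v =
      q * |ω s x| ^ (q - 2) * ω s x * fderiv ℝ (ω s) x v := by
    intro x v
    have h : HasFDerivAt (fun x => |ω s x| ^ q) _ x :=
      (hasDerivAt_abs_rpow (ω s x) hq).comp_hasFDerivAt x
        (hωs.differentiable one_ne_zero x).hasFDerivAt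
    rw [h.fderiv]
    simp
  have hibp := integral_mul_fderiv_apply_of_divergence_free hus hφ hW hsupp (hdiv s hs')
  have hi1 : Integrable fun x => φ x * (q * |ω s x| ^ (q - 2) * ω s x * r s x) :=
    (hφ.continuous.mul
      ((hsgn.comp hωs.continuous).mul hrs)).integrable_of_hasCompactSupport hsupp.mul_right
  have hi2 : Integrable fun x => φ x * fderiv ℝ (fun x => |ω s x| ^ q) x (u s x) :=
    (hφ.continuous.mul ((hW.continuous_fderiv one_ne_zero).clm_apply
      hus.continuous)).integrable_of_hasCompactSupport hsupp.mul_right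
  have hi3 : Integrable fun x => φ x * (|ω s x| ^ (q - 1) * |r s x|) :=
    (hφ.continuous.mul ((hωs.continuous.abs.rpow_const fun _ => Or.inr (by linarith)).mul
      hrs.abs)).integrable_of_hasCompactSupport hsupp.mul_right
  have hsplit : ∀ x, φ x * (q * |ω s x| ^ (q - 2) * ω s x * D s x) =
      φ x * (q * |ω s x| ^ (q - 2) * ω s x * r s x) -
        φ x * fderiv ℝ (fun x => |ω s x| ^ q) x (u s x) := by
    intro x
    rw [hWd, ← heq s hs' x]
    ring
  calc ∫ x, φ x * (q * |ω s x| ^ (q - 2) * ω s x * D s x)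
      = (∫ x, φ x * (q * |ω s x| ^ (q - 2) * ω s x * r s x)) +
          ∫ x, |ω s x| ^ q * fderiv ℝ φ x (u s x) := by
        simp_rw [hsplit]
        rw [integral_sub hi1 hi2, hibp, sub_neg_eq_add]
    _ ≤ (∫ x, q * (φ x * (|ω s x| ^ (q - 1) * |r s x|))) + κ := by
        refine add_le_add (integral_mono hi1 (hi3.const_mul q) fun x => ?_) (hflux s hs')
        have h1 : |ω s x| ^ (q - 1) = |ω s x| ^ (q - 2) * |ω s x| := by
          rw [← Real.rpow_add_one' (abs_nonneg _) (by linarith)]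
          ring_nf
        have h2 : ω s x * r s x ≤ |ω s x| * |r s x| := (le_abs_self _).trans (abs_mul _ _).le
        have h3 : 0 ≤ φ x * q * |ω s x| ^ (q - 2) := by
          have := hφ0 x
          positivity
        have h4 := mul_le_mul_of_nonneg_left h2 h3
        simp only [h1]
        linarith
    _ ≤ q * ((∫ x, φ x * |ω s x| ^ q) ^ (1 - 1 / q) * (∫ x, φ x * |r s x| ^ q) ^ (1 / q)) +
          κ := by
        rw [integral_const_mul]
        gcongr
        exact integral_weight_mul_le hq hφ.continuous hφ0 hsupp hωs.continuous hrs

theorem ofReal_rpow_integral_weight_le {E : Type*} [TopologicalSpace E]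
    [MeasurableSpace E] [OpensMeasurableSpace E] {μ : Measure E}
    [IsFiniteMeasureOnCompacts μ] {φ r : E → ℝ} {p : ℝ≥0∞} (hp0 : p ≠ 0) (hp : p ≠ ∞)
    (hφ : Continuous φ) (hφ0 : ∀ x, 0 ≤ φ x) (hφ1 : ∀ x, φ x ≤ 1) (hsupp : HasCompactSupport φ)
    (hr : Continuous r) :
    ENNReal.ofReal ((∫ x, φ x * |r x| ^ p.toReal ∂μ) ^ (1 / p.toReal)) ≤ eLpNorm r p μ := by
  have hq : 0 < p.toReal := ENNReal.toReal_pos hp0 hp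
  have hnn : ∀ x, 0 ≤ φ x * |r x| ^ p.toReal := fun x => mul_nonneg (hφ0 x) (by positivity)
  have hInt : Integrable (fun x => φ x * |r x| ^ p.toReal) μ :=
    (hφ.mul (hr.abs.rpow_const fun _ => Or.inr hq.le)).integrable_of_hasCompactSupport
      hsupp.mul_right
  rw [eLpNorm_eq_lintegral_rpow_enorm_toReal hp0 hp,
    ← ENNReal.ofReal_rpow_of_nonneg (integral_nonneg hnn) (by positivity),
    ofReal_integral_eq_lintegral_ofReal hInt (.of_forall hnn)]
  gcongr with x
  rw [Real.enorm_eq_ofReal_abs, ENNReal.ofReal_rpow_of_nonneg (abs_nonneg _) hq.le]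
  exact ENNReal.ofReal_le_ofReal (mul_le_of_le_one_left (by positivity) (hφ1 x))

theorem aemeasurable_eLpNorm_slice {X E F : Type*} [MeasurableSpace X] [MeasurableSpace E]
    [NormedAddCommGroup F] {μ : Measure X} {ν : Measure E} [SFinite ν] {f : X → E → F} {p : ℝ≥0∞}
    (hp0 : p ≠ 0) (hp : p ≠ ∞) (hf : AEStronglyMeasurable (Function.uncurry f) (μ.prod ν)) :
    AEMeasurable (fun s => eLpNorm (f s) p ν) μ := by
  simp_rw [eLpNorm_eq_lintegral_rpow_enorm_toReal hp0 hp]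
  exact (hf.enorm.pow_const p.toReal).lintegral_prod_right'.pow_const _

/-- **A priori `L^p` vorticity estimate for the forced transport equation**
`∂ₜω + u·∇ω = −j·∇b` on `[0,T) × ℝ²`, with `u` continuously differentiable and
divergence-free, bounded in `L²` uniformly in time, `ω` continuously differentiable and
bounded in `L² ∩ L^∞` uniformly in time, `j`, `b` measurable with `b` differentiable in `x`
and the mixed norms of `j` and `∇b` finite.  Then for `2 ≤ p < ∞` and every `t ∈ (0,T)`:
`‖ω(t)‖_{L^p} ≤ ‖ω(0)‖_{L^p} + ‖j‖_{L²([0,t);L^p)} ‖∇b‖_{L²([0,t);L^∞)}`. -/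
theorem transport_vorticity_Lp_estimate
    (T : ℝ) (hT : 0 < T) (p : ℝ≥0∞) (hp2 : 2 ≤ p) (hpfin : p ≠ ∞)
    (u : ℝ → EuclideanSpace ℝ (Fin 2) → EuclideanSpace ℝ (Fin 2))
    (ω : ℝ → EuclideanSpace ℝ (Fin 2) → ℝ)
    (j : ℝ → EuclideanSpace ℝ (Fin 2) → EuclideanSpace ℝ (Fin 2))
    (b : ℝ → EuclideanSpace ℝ (Fin 2) → ℝ)
    (hu : ContDiffOn ℝ 1 (Function.uncurry u) (Ico 0 T ×ˢ univ))
    (hdiv : ∀ t ∈ Ico (0:ℝ) T, ∀ x,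
      fderiv ℝ (fun y => u t y 0) x (EuclideanSpace.single 0 1) +
        fderiv ℝ (fun y => u t y 1) x (EuclideanSpace.single 1 1) = 0)
    (huL2 : (⨆ t : Ico (0:ℝ) T, eLpNorm (u t.1) 2 volume) < ⊤)
    (hω : ContDiffOn ℝ 1 (Function.uncurry ω) (Ico 0 T ×ˢ univ))
    (hωbdd : (⨆ t : Ico (0:ℝ) T,
        (eLpNorm (ω t.1) 2 volume + eLpNorm (ω t.1) ∞ volume)) < ⊤)
    (hj : AEStronglyMeasurable (Function.uncurry j)
      ((volume.restrict (Ico 0 T)).prod volume))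
    (hbmeas : AEStronglyMeasurable (Function.uncurry b)
      ((volume.restrict (Ico 0 T)).prod volume))
    (hb : ∀ t ∈ Ico (0:ℝ) T, Differentiable ℝ (b t))
    (hjfin : ∀ t ∈ Ico (0:ℝ) T, timeL2 t (fun s => eLpNorm (j s) p volume) < ⊤)
    (hbfin : ∀ t ∈ Ico (0:ℝ) T,
      timeL2 t (fun s => eLpNorm (fun x => fderiv ℝ (b s) x) ∞ volume) < ⊤)
    (heq : ∀ t ∈ Ico (0:ℝ) T, ∀ x,
      fderivWithin ℝ (Function.uncurry ω) (Ico 0 T ×ˢ univ) (t, x) (1, 0)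
        + fderiv ℝ (ω t) x (u t x) = -(fderiv ℝ (b t) x (j t x))) :
    ∀ t ∈ Ioo (0:ℝ) T,
      eLpNorm (ω t) p volume
        ≤ eLpNorm (ω 0) p volume +
            timeL2 t (fun s => eLpNorm (j s) p volume) *
              timeL2 t (fun s => eLpNorm (fun x => fderiv ℝ (b s) x) ∞ volume) := by
  have hp0 : p ≠ 0 := (two_pos.trans_le hp2).ne'
  have hq2 : 2 ≤ p.toReal := by simpa using ENNReal.toReal_mono hpfin hp2
  set q := p.toReal
  have hq : 1 < q := by linarith
  have hq0 : 0 < q := by linarith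
  intro t ht
  have htI : t ∈ Ico 0 T := Ioo_subset_Ico_self ht
  have h0I : (0:ℝ) ∈ Ico 0 T := ⟨le_rfl, hT⟩
  set U := ⨆ t : Ico (0:ℝ) T, eLpNorm (u t.1) 2 volume
  set C := ⨆ t : Ico (0:ℝ) T, (eLpNorm (ω t.1) 2 volume + eLpNorm (ω t.1) ∞ volume)
  have hU : ∀ s ∈ Ico (0:ℝ) T, eLpNorm (u s) 2 volume ≤ U := fun s hs =>
    le_iSup (fun t : Ico (0:ℝ) T => eLpNorm (u t.1) 2 volume) ⟨s, hs⟩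
  have hC : ∀ s ∈ Ico (0:ℝ) T, eLpNorm (ω s) 2 volume + eLpNorm (ω s) ∞ volume ≤ C :=
    fun s hs => le_iSup (fun t : Ico (0:ℝ) T =>
      (eLpNorm (ω t.1) 2 volume + eLpNorm (ω t.1) ∞ volume)) ⟨s, hs⟩
  have hC2 : ∀ s ∈ Ico (0:ℝ) T, eLpNorm (ω s) 2 volume ≤ C := fun s hs =>
    le_self_add.trans (hC s hs)
  have hCtop : ∀ s ∈ Ico (0:ℝ) T, eLpNorm (ω s) ∞ volume ≤ C := fun s hs =>
    le_add_self.trans (hC s hs)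
  have hωc : ∀ s ∈ Ico (0:ℝ) T, Continuous (ω s) := fun s hs => (contDiff_slice hω hs).continuous
  have hωLp : ∀ s ∈ Ico (0:ℝ) T, MemLp (ω s) p volume := fun s hs =>
    memLp_of_two_of_top hp2 hpfin (hωc s hs).aestronglyMeasurable hωbdd.ne (hC2 s hs)
      (hCtop s hs)
  have hωint : ∀ s ∈ Ico (0:ℝ) T, Integrable (fun x => |ω s x| ^ q) := fun s hs =>
    (hωLp s hs).integrable_norm_rpow hp0 hpfin
  let r : ℝ → EuclideanSpace ℝ (Fin 2) → ℝ := fun s x => -(fderiv ℝ (b s) x (j s x))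
  have hr : ContinuousOn (Function.uncurry r) (Ico 0 T ×ˢ univ) := by
    have hD := hω.continuousOn_fderivWithin ((uniqueDiffOn_Ico 0 T).prod uniqueDiffOn_univ) le_rfl
    refine ((hD.clm_apply (continuousOn_const (c := ((1:ℝ), (0 : EuclideanSpace ℝ (Fin 2)))))).add
      (hD.clm_apply (continuousOn_const (c := (0:ℝ)).prodMk hu.continuousOn))).congr ?_
    rintro ⟨s, x⟩ ⟨hs, -⟩
    simp only [Function.uncurry_apply_pair, r, ← heq s hs x, fderiv_slice_apply hω hs]
    rfl
  have hrc : ∀ s ∈ Ico (0:ℝ) T, Continuous (r s) := fun s hs =>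
    hr.comp_continuous (f := fun x => (s, x)) (by fun_prop) fun x => ⟨hs, mem_univ x⟩
  obtain ⟨φ, δ, hφ, hsupp, hφ0, hφ1, hδ, hδlim, hφlim⟩ :=
    exists_cutoff (E := EuclideanSpace ℝ (Fin 2))
  set N := timeL2 t (fun s => eLpNorm (j s) p volume) *
    timeL2 t (fun s => eLpNorm (fun x => fderiv ℝ (b s) x) ∞ volume)
  have hN : N ≠ ⊤ := ENNReal.mul_ne_top (hjfin t htI).ne (hbfin t htI).ne
  have hmono : volume.restrict (Ico (0:ℝ) t) ≤ volume.restrict (Ico 0 T) :=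
    Measure.restrict_mono (Ico_subset_Ico_right ht.2.le) le_rfl
  have hjt : AEStronglyMeasurable (Function.uncurry j)
      ((volume.restrict (Ico 0 t)).prod volume) :=
    hj.mono_measure (Measure.prod_mono hmono le_rfl)
  have hρ : ∀ n, ∫ s in (0:ℝ)..t, (∫ x, φ n x * |r s x| ^ q) ^ (1 / q) ≤ N.toReal := by
    intro n
    have hρc : ContinuousOn (fun s => (∫ x, φ n x * |r s x| ^ q) ^ (1 / q)) (Icc 0 t) := by
      refine ((continuousOn_integral_of_compact_support
        (f := fun s x => φ n x * |r s x| ^ q) (hsupp n) ?_ ?_).mono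
          (Icc_subset_Ico_right ht.2)).rpow_const fun _ _ => Or.inr (by positivity)
      · exact ((hφ n).continuous.comp continuous_snd).continuousOn.mul
          (hr.abs.rpow_const fun _ _ => Or.inr hq0.le)
      · intro s x _ hx
        simp [image_eq_zero_of_notMem_tsupport hx]
    have hρi := (hρc.integrableOn_Icc (μ := volume)).mono_set Ico_subset_Icc_self
    have hρn : ∀ s, 0 ≤ (∫ x, φ n x * |r s x| ^ q) ^ (1 / q) := fun s =>
      Real.rpow_nonneg (integral_nonneg fun x => mul_nonneg (hφ0 n x) (by positivity)) _
    rw [intervalIntegral.integral_of_le ht.1.le, ← integral_Ico_eq_integral_Ioc]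
    refine (ENNReal.ofReal_le_iff_le_toReal hN).1 ?_
    rw [ofReal_integral_eq_lintegral_ofReal hρi (.of_forall hρn)]
    refine lintegral_le_timeL2_mul_timeL2 hρi.aestronglyMeasurable.aemeasurable.ennreal_ofReal
      (aemeasurable_eLpNorm_slice hp0 hpfin hjt) (hjfin t htI) ?_
    filter_upwards [hjt.prodMk_left, ae_restrict_mem measurableSet_Ico] with s hjs hs
    have hsT : s ∈ Ico 0 T := ⟨hs.1, hs.2.trans ht.2⟩
    refine (ofReal_rpow_integral_weight_le hp0 hpfin (hφ n).continuous (hφ0 n) (hφ1 n) (hsupp n)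
      (hrc s hsT)).trans ?_
    have := eLpNorm_le_eLpNorm_top_mul_eLpNorm p (fun x => fderiv ℝ (b s) x) hjs
      (fun L v => -(L v)) 1 (.of_forall fun x => by
        simpa using (fderiv ℝ (b s) x).le_opNNNorm (j s x))
    simpa using this
  set M := U.toReal ^ 2 + (C.toReal ^ (q - 1)) ^ 2 * C.toReal ^ 2
  have hM : 0 ≤ M := by positivity
  have hloc : ∀ ε > 0, ∀ n, ((∫ x, φ n x * |ω t x| ^ q) + ε) ^ (1 / q) ≤
      ((∫ x, |ω 0 x| ^ q) + ε) ^ (1 / q) + N.toReal +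
        t * (ε ^ (1 / q - 1) * (δ n * M)) := by
    intro ε hε n
    have hδn : 0 ≤ δ n := (norm_nonneg _).trans (hδ n 0)
    refine (transport_localized_estimate (r := r) hq ht hε (mul_nonneg hδn hM) hu hdiv hω hr heq
      (hφ n) (hsupp n) (hφ0 n) fun s hs => integral_flux_le hq.le
        (contDiff_slice hu hs).continuous.aestronglyMeasurable
        (hωc s hs).aestronglyMeasurable huL2.ne (hU s hs) hωbdd.ne (hC2 s hs) (hCtop s hs)
        (hδ n)).trans ?_
    have hnn : 0 ≤ ∫ x, φ n x * |ω 0 x| ^ q :=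
      integral_nonneg fun x => mul_nonneg (hφ0 n x) (by positivity)
    gcongr ?_ + ?_ + _
    · refine Real.rpow_le_rpow (by linarith) (add_le_add_left ?_ ε) (by positivity)
      exact integral_mono_of_nonneg
        (.of_forall fun x => mul_nonneg (hφ0 n x) (by positivity)) (hωint 0 h0I)
        (.of_forall fun x => mul_le_of_le_one_left (by positivity) (hφ1 n x))
    · exact hρ n
  have hglim : Filter.Tendsto (fun n => ∫ x, φ n x * |ω t x| ^ q) Filter.atTop
      (nhds (∫ x, |ω t x| ^ q)) := by
    refine tendsto_integral_of_dominated_convergence (fun x => |ω t x| ^ q) (fun n => ?_)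
      (hωint t htI) (fun n => .of_forall fun x => ?_) (.of_forall fun x => ?_)
    · exact (hφ n).continuous.aestronglyMeasurable.mul (hωint t htI).aestronglyMeasurable
    · rw [Real.norm_of_nonneg (mul_nonneg (hφ0 n x) (by positivity))]
      exact mul_le_of_le_one_left (by positivity) (hφ1 n x)
    · simpa using (hφlim x).mul_const (|ω t x| ^ q)
  have hnn : ∀ s, 0 ≤ ∫ x, |ω s x| ^ q := fun s => integral_nonneg fun x => by positivity
  have hreg : ∀ ε > 0, ((∫ x, |ω t x| ^ q) + ε) ^ (1 / q) ≤
      ((∫ x, |ω 0 x| ^ q) + ε) ^ (1 / q) + N.toReal := by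
    intro ε hε
    have hl := (hglim.add_const ε).rpow_const (p := 1 / q) (Or.inr (by positivity))
    have hR := (((hδlim.mul_const M).const_mul (ε ^ (1 / q - 1))).const_mul t).const_add
      (((∫ x, |ω 0 x| ^ q) + ε) ^ (1 / q) + N.toReal)
    simpa using le_of_tendsto_of_tendsto' hl hR (hloc ε hε)
  have hfinal : (∫ x, |ω t x| ^ q) ^ (1 / q) ≤ (∫ x, |ω 0 x| ^ q) ^ (1 / q) + N.toReal := by
    have hc : ∀ s, Filter.Tendsto (fun ε : ℝ => ((∫ x, |ω s x| ^ q) + ε) ^ (1 / q))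
        (nhdsWithin 0 (Ioi 0)) (nhds ((∫ x, |ω s x| ^ q) ^ (1 / q))) := by
      intro s
      have : Continuous fun ε : ℝ => ((∫ x, |ω s x| ^ q) + ε) ^ (1 / q) :=
        (continuous_const.add continuous_id).rpow_const fun _ => Or.inr (by positivity)
      simpa using (this.tendsto 0).mono_left nhdsWithin_le_nhds
    exact le_of_tendsto_of_tendsto (hc t) ((hc 0).add_const _)
      (Filter.eventually_of_mem self_mem_nhdsWithin hreg)
  have hnorm : ∀ s ∈ Ico (0:ℝ) T, eLpNorm (ω s) p volume =
      ENNReal.ofReal ((∫ x, |ω s x| ^ q) ^ (1 / q)) := fun s hs => by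
    rw [(hωLp s hs).eLpNorm_eq_integral_rpow_norm hp0 hpfin, one_div]
    rfl
  rw [hnorm t htI, hnorm 0 h0I, ← ENNReal.ofReal_toReal hN,
    ← ENNReal.ofReal_add (Real.rpow_nonneg (hnn 0) _) ENNReal.toReal_nonneg]
  exact ENNReal.ofReal_le_ofReal hfinal
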